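/- Ground states of the octagon-square lattice on the torus: for all integers M, L ≥ 2, the hard-core fermion model on the torus octagon-square lattice O_{M,L} has exactly 2^M + 2^L − 1 zero-energy ground states, i.e. dim ker H = 2^M + 2^L − 1; moreover every state in ker H is an eigenvector of the number operator F (F|I⟩ = |I|·|I⟩) with eigenvalue M·L, i.e. all ground states reside at filling 1/4 of the 4ML sites. -/

import Mathlib

/-! ### The supersymmetric hard-core fermion model on a graph

For a finite simple graph `G` with totally ordered vertex set, the Hilbert space has an
orthonormal basis `{|I⟩ : I an independent set of G}`, the supercharge acts by
`Q|I⟩ = Σ_v ε(v,I) |I ∪ {v}⟩` (sum over `v ∉ I` with `I ∪ {v}` independent,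
`ε(v,I) = (−1)^{#{w ∈ I : w < v}}`), and the Hamiltonian is `H = Q Q† + Q† Q`. -/

open scoped BigOperators

/-- A finite set of vertices is independent if it contains no edge of `G`. -/
def Indep {V : Type*} (G : SimpleGraph V) (I : Finset V) : Prop :=
  ∀ ⦃a⦄, a ∈ I → ∀ ⦃b⦄, b ∈ I → ¬ G.Adj a b

lemma Indep.mono {V : Type*} {G : SimpleGraph V} {I J : Finset V}
    (hI : Indep G I) (hJI : J ⊆ I) : Indep G J :=
  fun _ ha _ hb => hI (hJI ha) (hJI hb)

/-- The independent sets of `G`, indexing the orthonormal basis of the Hilbert space. -/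
def IndepSet {V : Type*} (G : SimpleGraph V) : Type _ := {I : Finset V // Indep G I}

noncomputable instance {V : Type*} [Fintype V] [LinearOrder V] (G : SimpleGraph V) :
    Fintype (IndepSet G) := by
  classical exact Subtype.fintype _

instance {V : Type*} [LinearOrder V] (G : SimpleGraph V) : DecidableEq (IndepSet G) := by
  unfold IndepSet; infer_instance

/-- The Hilbert space `ℋ_G` of the hard-core fermion model: one orthonormal basis state
`|I⟩` for every independent set `I` of `G`. -/
noncomputable abbrev FockSpace {V : Type*} [Fintype V] [LinearOrder V] (G : SimpleGraph V) :=
  EuclideanSpace ℂ (IndepSet G)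

/-- The fermionic sign `ε(v, I) = (−1)^{#{w ∈ I : w < v}}`. -/
def fsign {V : Type*} [LinearOrder V] (I : Finset V) (v : V) : ℂ :=
  (-1) ^ (I.filter (· < v)).card

/-- The supercharge `Q`, with `Q|I⟩ = Σ_v ε(v,I) |I ∪ {v}⟩` over vertices `v ∉ I` such that
`I ∪ {v}` is independent; equivalently `(Qψ)(J) = Σ_{v ∈ J} ε(v, J∖{v}) ψ(J∖{v})`. -/
noncomputable def supercharge {V : Type*} [Fintype V] [LinearOrder V] (G : SimpleGraph V) :
    FockSpace G →ₗ[ℂ] FockSpace G where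
  toFun ψ := WithLp.toLp 2 fun J => ∑ v ∈ J.1, fsign (J.1.erase v) v *
      ψ ⟨J.1.erase v, J.2.mono (Finset.erase_subset v J.1)⟩
  map_add' ψ φ := by
    ext J
    change ∑ v ∈ J.1, fsign (J.1.erase v) v *
      (ψ ⟨J.1.erase v, J.2.mono (Finset.erase_subset v J.1)⟩ +
        φ ⟨J.1.erase v, J.2.mono (Finset.erase_subset v J.1)⟩) = _
    simp [mul_add, Finset.sum_add_distrib]
  map_smul' c ψ := by
    ext J
    change ∑ v ∈ J.1, fsign (J.1.erase v) v *
      (c * ψ ⟨J.1.erase v, J.2.mono (Finset.erase_subset v J.1)⟩) = _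
    simp [Finset.mul_sum, mul_left_comm]

/-- The Hamiltonian `H = Q Q† + Q† Q` of the supersymmetric hard-core fermion model. -/
noncomputable def hamiltonian {V : Type*} [Fintype V] [LinearOrder V] (G : SimpleGraph V) :
    FockSpace G →ₗ[ℂ] FockSpace G :=
  supercharge G ∘ₗ LinearMap.adjoint (supercharge G)
    + LinearMap.adjoint (supercharge G) ∘ₗ supercharge G

/-- The fermion-number operator `F`, with `F|I⟩ = |I| · |I⟩`. -/
noncomputable def numberOp {V : Type*} [Fintype V] [LinearOrder V] (G : SimpleGraph V) :
    FockSpace G →ₗ[ℂ] FockSpace G where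
  toFun ψ := WithLp.toLp 2 fun I => (I.1.card : ℂ) * ψ I
  map_add' ψ φ := by ext I; simp [mul_add]
  map_smul' c ψ := by ext I; simp [mul_left_comm]

/-- The bosonic subspace: the span of the basis states `|I⟩` with `|I|` even. -/
noncomputable def bosonic {V : Type*} [Fintype V] [LinearOrder V] (G : SimpleGraph V) :
    Submodule ℂ (FockSpace G) :=
  Submodule.span ℂ
    {e : FockSpace G | ∃ I : IndepSet G, Even I.1.card ∧ e = EuclideanSpace.single I 1}

/-- The fermionic subspace: the span of the basis states `|I⟩` with `|I|` odd. -/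
noncomputable def fermionic {V : Type*} [Fintype V] [LinearOrder V] (G : SimpleGraph V) :
    Submodule ℂ (FockSpace G) :=
  Submodule.span ℂ
    {e : FockSpace G | ∃ I : IndepSet G, Odd I.1.card ∧ e = EuclideanSpace.single I 1}

/-! ### The octagon-square (4-8) lattice on the torus -/

/-- Directed edge relation of the torus octagon-square lattice with `M × L` square
plaquettes: square-plaquette edges `(i,j,0)-(i,j,1)`, `(i,j,1)-(i,j,2)`, `(i,j,2)-(i,j,3)`,
`(i,j,3)-(i,j,0)`, and linking edges `(i,j,1)-(i+1,j,3)`, `(i,j,2)-(i,j+1,0)`, with both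
coordinates periodic. -/
def octTorusE (M L : ℕ) [NeZero M] [NeZero L] (a b : Fin M × Fin L × Fin 4) : Prop :=
  (a.1 = b.1 ∧ a.2.1 = b.2.1 ∧
    ((a.2.2 = 0 ∧ b.2.2 = 1) ∨ (a.2.2 = 1 ∧ b.2.2 = 2) ∨
     (a.2.2 = 2 ∧ b.2.2 = 3) ∨ (a.2.2 = 3 ∧ b.2.2 = 0))) ∨
  (b.1 = a.1 + 1 ∧ a.2.1 = b.2.1 ∧ a.2.2 = 1 ∧ b.2.2 = 3) ∨
  (a.1 = b.1 ∧ b.2.1 = a.2.1 + 1 ∧ a.2.2 = 2 ∧ b.2.2 = 0)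

/-- The torus octagon-square lattice `O_{M,L}`. -/
def octTorus (M L : ℕ) [NeZero M] [NeZero L] :
    SimpleGraph (Fin M × Fin L × Fin 4) where
  Adj a b := a ≠ b ∧ (octTorusE M L a b ∨ octTorusE M L b a)
  symm := by
    constructor
    rintro a b ⟨hne, h⟩
    exact ⟨hne.symm, by tauto⟩
  loopless := ⟨fun a h => h.1 rfl⟩

/-! ### Abstract discrete Morse theory for the supercharge -/

section Abstract

set_option linter.unusedSectionVars false

variable {V : Type*} [Fintype V] [LinearOrder V] {G : SimpleGraph V}

/-- The underlying finite set of an independent set. -/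
def IndepSet.car (I : IndepSet G) : Finset V := I.1

/-- Bundling an independent set. -/
def IndepSet.of (I : Finset V) (h : Indep G I) : IndepSet G := ⟨I, h⟩

/-- Removing a vertex from an independent set. -/
def IndepSet.del (I : IndepSet G) (v : V) : IndepSet G :=
  ⟨I.1.erase v, I.2.mono (Finset.erase_subset v I.1)⟩

lemma IndepSet.ind (I : IndepSet G) : Indep G I.car := I.2

@[simp] lemma IndepSet.car_of (I : Finset V) (h : Indep G I) : (IndepSet.of I h).car = I := rfl

@[simp] lemma IndepSet.car_del (I : IndepSet G) (v : V) : (I.del v).car = I.car.erase v := rfl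

lemma IndepSet.car_inj {I J : IndepSet G} (h : I.car = J.car) : I = J := Subtype.ext h

lemma IndepSet.del_comm (I : IndepSet G) (v w : V) : (I.del v).del w = (I.del w).del v :=
  IndepSet.car_inj (by simp [Finset.erase_right_comm])

lemma supercharge_apply (ψ : FockSpace G) (J : IndepSet G) :
    supercharge G ψ J = ∑ v ∈ J.car, fsign (J.car.erase v) v * ψ (J.del v) := rfl

lemma fsign_ne_zero (I : Finset V) (v : V) : fsign I v ≠ 0 := by
  unfold fsign
  exact pow_ne_zero _ (by norm_num)

lemma fsign_anti_aux (J : Finset V) {v w : V} (hv : v ∈ J) (h : v < w) :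
    fsign (J.erase v) v * fsign ((J.erase v).erase w) w =
      - (fsign (J.erase w) w * fsign ((J.erase w).erase v) v) := by
  unfold fsign
  have h1 : (J.erase w).filter (· < w) = insert v (((J.erase v).erase w).filter (· < w)) := by
    ext x
    simp only [Finset.mem_filter, Finset.mem_erase, Finset.mem_insert]
    constructor
    · rintro ⟨⟨a, b⟩, c⟩
      by_cases hx : x = v
      · exact Or.inl hx
      · exact Or.inr ⟨⟨a, hx, b⟩, c⟩
    · rintro (rfl | ⟨⟨a, b, c⟩, d⟩)
      · exact ⟨⟨h.ne, hv⟩, h⟩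
      · exact ⟨⟨a, c⟩, d⟩
  have h2 : (J.erase v).filter (· < v) = ((J.erase w).erase v).filter (· < v) := by
    ext x
    simp only [Finset.mem_filter, Finset.mem_erase]
    constructor
    · rintro ⟨⟨a, b⟩, c⟩
      exact ⟨⟨a, (c.trans h).ne, b⟩, c⟩
    · rintro ⟨⟨a, b, c⟩, d⟩
      exact ⟨⟨a, c⟩, d⟩
  rw [h1, h2, Finset.card_insert_of_notMem (by simp)]
  ring

lemma fsign_anti (J : Finset V) {v w : V} (hv : v ∈ J) (hw : w ∈ J) (h : v ≠ w) :
    fsign (J.erase v) v * fsign ((J.erase v).erase w) w =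
      - (fsign (J.erase w) w * fsign ((J.erase w).erase v) v) := by
  rcases lt_or_gt_of_ne h with h | h
  · exact fsign_anti_aux J hv h
  · rw [fsign_anti_aux J hw h, neg_neg]

lemma supercharge_sq (ψ : FockSpace G) : supercharge G (supercharge G ψ) = 0 := by
  ext J
  rw [supercharge_apply]
  simp only [supercharge_apply, Finset.mul_sum, IndepSet.car_del]
  rw [Finset.sum_sigma']
  refine Finset.sum_involution (fun p _ => ⟨p.2, p.1⟩) ?_ ?_ ?_ ?_
  · rintro ⟨v, w⟩ h
    simp only [Finset.mem_sigma, Finset.mem_erase] at h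
    obtain ⟨hv, hwv, hw⟩ := h
    have := fsign_anti J.car hv hw (Ne.symm hwv)
    simp only
    rw [J.del_comm w v, ← mul_assoc, ← mul_assoc, this]
    ring
  · rintro ⟨v, w⟩ h _ heq
    simp only [Finset.mem_sigma, Finset.mem_erase] at h
    simp only [Sigma.mk.injEq, heq_eq_eq] at heq
    exact h.2.1 heq.1
  · rintro ⟨v, w⟩ h
    simp only [Finset.mem_sigma, Finset.mem_erase] at h ⊢
    exact ⟨h.2.2, Ne.symm h.2.1, h.1⟩
  · rintro ⟨v, w⟩ h
    rfl

lemma mem_ker_hamiltonian (ψ : FockSpace G) :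
    ψ ∈ LinearMap.ker (hamiltonian G) ↔
      supercharge G ψ = 0 ∧ LinearMap.adjoint (supercharge G) ψ = 0 := by
  rw [LinearMap.mem_ker]
  constructor
  · intro h
    have h1 : inner ℂ (hamiltonian G ψ) ψ = 0 := by rw [h, inner_zero_left]
    simp only [hamiltonian, LinearMap.add_apply, LinearMap.comp_apply, inner_add_left] at h1
    have e1 : inner ℂ (supercharge G (LinearMap.adjoint (supercharge G) ψ)) ψ =
        inner ℂ (LinearMap.adjoint (supercharge G) ψ) (LinearMap.adjoint (supercharge G) ψ) :=
      (LinearMap.adjoint_inner_right (supercharge G) _ _).symm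
    have e2 : inner ℂ (LinearMap.adjoint (supercharge G) (supercharge G ψ)) ψ =
        inner ℂ (supercharge G ψ) (supercharge G ψ) :=
      LinearMap.adjoint_inner_left (supercharge G) _ _
    rw [e1, e2, inner_self_eq_norm_sq_to_K, inner_self_eq_norm_sq_to_K] at h1
    have h1 : ‖LinearMap.adjoint (supercharge G) ψ‖ ^ 2 + ‖supercharge G ψ‖ ^ 2 = 0 := by
      apply Complex.ofReal_injective
      push_cast
      exact h1
    have a := sq_nonneg ‖supercharge G ψ‖
    have b := sq_nonneg ‖LinearMap.adjoint (supercharge G) ψ‖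
    constructor
    · have : ‖supercharge G ψ‖ ^ 2 = 0 := by linarith
      simpa using this
    · have : ‖LinearMap.adjoint (supercharge G) ψ‖ ^ 2 = 0 := by linarith
      simpa using this
  · rintro ⟨h1, h2⟩
    simp [hamiltonian, h1, h2]

lemma finrank_ker_hamiltonian :
    Module.finrank ℂ (LinearMap.range (supercharge G)) +
      Module.finrank ℂ (LinearMap.ker (hamiltonian G)) =
      Module.finrank ℂ (LinearMap.ker (supercharge G)) := by
  have h : LinearMap.ker (hamiltonian G) =
      (LinearMap.range (supercharge G))ᗮ ⊓ LinearMap.ker (supercharge G) := by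
    ext ψ
    rw [mem_ker_hamiltonian, Submodule.mem_inf, LinearMap.orthogonal_range, LinearMap.mem_ker,
      LinearMap.mem_ker, and_comm]
  rw [h]
  apply Submodule.finrank_add_inf_finrank_orthogonal
  rintro _ ⟨φ, rfl⟩
  exact supercharge_sq φ

/-- Multiplication by a function of the particle number. -/
noncomputable def mask (p : ℕ → ℂ) (ψ : FockSpace G) : FockSpace G :=
  WithLp.toLp 2 fun I => p I.car.card * ψ I

lemma mask_apply (p : ℕ → ℂ) (ψ : FockSpace G) (I : IndepSet G) :
    mask p ψ I = p I.car.card * ψ I := rfl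

lemma supercharge_mask (p : ℕ → ℂ) (ψ : FockSpace G) :
    mask p (supercharge G ψ) = supercharge G (mask (fun k => p (k + 1)) ψ) := by
  ext J
  rw [mask_apply, supercharge_apply, supercharge_apply, Finset.mul_sum]
  refine Finset.sum_congr rfl fun v hv => ?_
  rw [mask_apply, IndepSet.car_del]
  dsimp only
  rw [Finset.card_erase_add_one hv]
  ring

/-- Data of a discrete Morse matching: `m I` is the vertex to be toggled. -/
structure Matching (G : SimpleGraph V) (m : Finset V → Option V) {κ : Type*} [LinearOrder κ]
    (f : Finset V → κ) (n : ℕ) : Prop where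
  ins : ∀ I, Indep G I → ∀ v, m I = some v → Indep G (insert v I) ∧ m (insert v I) = some v
  era : ∀ I, Indep G I → ∀ v, m I = some v → m (I.erase v) = some v
  acyc : ∀ J, Indep G J → ∀ v w u, m J = some v → v ∈ J → w ∈ J → w ≠ v →
    m (J.erase w) = some u → u ∉ J.erase w → f (J.erase w) < f (J.erase v)
  crit : ∀ I, Indep G I → m I = none → I.card = n

/-- lower cells -/
def IsU (m : Finset V → Option V) (I : IndepSet G) : Prop := ∃ v, m I.car = some v ∧ v ∉ I.car
/-- upper cells -/
def IsD (m : Finset V → Option V) (I : IndepSet G) : Prop := ∃ v, m I.car = some v ∧ v ∈ I.car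
/-- critical cells -/
def IsC (m : Finset V → Option V) (I : IndepSet G) : Prop := m I.car = none

lemma cell_cases (m : Finset V → Option V) (I : IndepSet G) : IsU m I ∨ IsD m I ∨ IsC m I := by
  rcases h : m I.car with _ | v
  · exact Or.inr (Or.inr h)
  · by_cases hv : v ∈ I.car
    · exact Or.inr (Or.inl ⟨v, h, hv⟩)
    · exact Or.inl ⟨v, h, hv⟩

lemma not_U_of_D {m : Finset V → Option V} {I : IndepSet G} (h : IsD m I) : ¬ IsU m I := by
  rintro ⟨v, h1, h2⟩
  obtain ⟨w, h3, h4⟩ := h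
  rw [h1] at h3
  cases h3
  exact h2 h4

lemma not_U_of_C {m : Finset V → Option V} {I : IndepSet G} (h : IsC m I) : ¬ IsU m I := by
  rintro ⟨v, h1, h2⟩
  rw [IsC, h1] at h
  cases h

lemma not_D_of_C {m : Finset V → Option V} {I : IndepSet G} (h : IsC m I) : ¬ IsD m I := by
  rintro ⟨v, h1, h2⟩
  rw [IsC, h1] at h
  cases h

variable {m : Finset V → Option V} {κ : Type*} [LinearOrder κ] {f : Finset V → κ} {n : ℕ}

lemma Matching.key (hm : Matching G m f n) (ψ : FockSpace G)
    (h1 : ∀ I, ¬ IsU m I → ψ I = 0) (h2 : ∀ J, IsD m J → supercharge G ψ J = 0) : ψ = 0 := by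
  classical
  by_contra hne
  have hex : (Finset.univ.filter fun I => ψ I ≠ 0).Nonempty := by
    by_contra hem
    apply hne
    ext I
    by_contra hI
    exact hem ⟨I, by simpa using hI⟩
  obtain ⟨I, hI, hmin⟩ := Finset.exists_min_image _ (fun I : IndepSet G => f I.car) hex
  simp only [Finset.mem_filter, Finset.mem_univ, true_and] at hI hmin
  have hU : IsU m I := by
    by_contra hU
    exact hI (h1 I hU)
  obtain ⟨v, hv, hvI⟩ := hU
  obtain ⟨hind, hmv⟩ := hm.ins I.car I.ind v hv
  have h3 := h2 (IndepSet.of (insert v I.car) hind) ⟨v, hmv, Finset.mem_insert_self _ _⟩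
  rw [supercharge_apply, Finset.sum_eq_single v] at h3
  · rcases mul_eq_zero.1 h3 with h3 | h3
    · exact fsign_ne_zero _ _ h3
    · apply hI
      convert h3
      apply IndepSet.car_inj
      simp [Finset.erase_insert hvI]
  · intro w hw hwv
    have : ψ ((IndepSet.of (insert v I.car) hind).del w) = 0 := by
      by_contra hc
      have hle := hmin _ hc
      have hU : IsU m ((IndepSet.of (insert v I.car) hind).del w) := by
        by_contra hU
        exact hc (h1 _ hU)
      obtain ⟨u, hu, huI⟩ := hU
      have := hm.acyc _ hind v w u hmv (Finset.mem_insert_self _ _) hw hwv hu huI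
      rw [Finset.erase_insert hvI] at this
      exact absurd hle (not_le.2 this)
    simp only [this, mul_zero]
  · intro h
    exact absurd (Finset.mem_insert_self _ _) h

open Classical in
lemma Matching.card_UD (hm : Matching G m f n) :
    Fintype.card {I : IndepSet G // IsU m I} = Fintype.card {I : IndepSet G // IsD m I} := by
  apply le_antisymm
  · refine Fintype.card_le_of_injective (fun I => ⟨IndepSet.of (insert I.2.choose I.1.car)
      (hm.ins _ I.1.ind _ I.2.choose_spec.1).1, I.2.choose,
      (hm.ins _ I.1.ind _ I.2.choose_spec.1).2, Finset.mem_insert_self _ _⟩) ?_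
    intro I J h
    have h' : insert I.2.choose I.1.car = insert J.2.choose J.1.car := congrArg (fun K => K.1.car) h
    have e1 := (hm.ins _ I.1.ind _ I.2.choose_spec.1).2
    have e2 := (hm.ins _ J.1.ind _ J.2.choose_spec.1).2
    rw [h', e2] at e1
    have e3 := Option.some.inj e1
    have : I.1.car = J.1.car := by
      rw [← Finset.erase_insert I.2.choose_spec.2, ← Finset.erase_insert J.2.choose_spec.2, h', e3]
    exact Subtype.ext (IndepSet.car_inj this)
  · refine Fintype.card_le_of_injective (fun I => ⟨I.1.del I.2.choose, I.2.choose,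
      hm.era _ I.1.ind _ I.2.choose_spec.1, Finset.notMem_erase _ _⟩) ?_
    intro I J h
    have h' : I.1.car.erase I.2.choose = J.1.car.erase J.2.choose := congrArg (fun K => K.1.car) h
    have e1 := hm.era _ I.1.ind _ I.2.choose_spec.1
    have e2 := hm.era _ J.1.ind _ J.2.choose_spec.1
    rw [h', e2] at e1
    have e3 := Option.some.inj e1
    have : I.1.car = J.1.car := by
      rw [← Finset.insert_erase I.2.choose_spec.2, ← Finset.insert_erase J.2.choose_spec.2, h', e3]
    exact Subtype.ext (IndepSet.car_inj this)

open Classical in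
/-- Extension by zero from a subset of cells. -/
noncomputable def extz (P : IndepSet G → Prop) : ({I : IndepSet G // P I} → ℂ) →ₗ[ℂ] FockSpace G where
  toFun x := WithLp.toLp 2 fun I => if h : P I then x ⟨I, h⟩ else 0
  map_add' x y := by
    ext I
    by_cases h : P I <;> simp [h]
  map_smul' c x := by
    ext I
    by_cases h : P I <;> simp [h]

lemma extz_pos {P : IndepSet G → Prop} (x : {I : IndepSet G // P I} → ℂ) {I : IndepSet G}
    (h : P I) : extz P x I = x ⟨I, h⟩ := by
  simp [extz, h]

lemma extz_neg {P : IndepSet G → Prop} (x : {I : IndepSet G // P I} → ℂ) {I : IndepSet G}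
    (h : ¬ P I) : extz P x I = 0 := by
  simp [extz, h]

/-- Restriction to a subset of cells. -/
noncomputable def resz (P : IndepSet G → Prop) : FockSpace G →ₗ[ℂ] ({I : IndepSet G // P I} → ℂ) where
  toFun ψ := fun I => ψ I.1
  map_add' x y := by
    ext I
    simp
  map_smul' c x := by
    ext I
    simp

lemma resz_apply {P : IndepSet G → Prop} (ψ : FockSpace G) (I : {I : IndepSet G // P I}) :
    resz P ψ I = ψ I.1 := rfl

lemma Matching.surj (hm : Matching G m f n) (d : {I : IndepSet G // IsD m I} → ℂ) :
    ∃ y : FockSpace G, (∀ I, ¬ IsU m I → y I = 0) ∧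
      ∀ J (hJ : IsD m J), supercharge G y J = d ⟨J, hJ⟩ := by
  classical
  let T := (resz (IsD m)) ∘ₗ (supercharge G) ∘ₗ (extz (G := G) (IsU m))
  have hinj : Function.Injective T := by
    rw [injective_iff_map_eq_zero]
    intro x hx
    have := hm.key (extz (IsU m) x) (fun I hI => extz_neg x hI)
      (fun J hJ => congrFun hx ⟨J, hJ⟩)
    ext I
    rw [← extz_pos x I.2, this]
    rfl
  have hs : Function.Surjective T := by
    rw [← LinearMap.injective_iff_surjective_of_finrank_eq_finrank]
    · exact hinj
    · simp only [Module.finrank_fintype_fun_eq_card]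
      exact hm.card_UD
  obtain ⟨x, hx⟩ := hs d
  exact ⟨extz (IsU m) x, fun I hI => extz_neg x hI, fun J hJ => congrFun hx ⟨J, hJ⟩⟩

lemma Matching.key2 (hm : Matching G m f n) (χ : FockSpace G)
    (hD : ∀ I, IsD m I → χ I = 0) (hC : ∀ I, IsC m I → χ I = 0)
    (hQ : ∀ J, IsD m J → supercharge G χ J = 0) : χ = 0 := by
  refine hm.key χ (fun I hI => ?_) hQ
  rcases cell_cases m I with h | h | h
  · exact absurd h hI
  · exact hD I h
  · exact hC I h

lemma Matching.surj_ker (hm : Matching G m f n) (d : {I : IndepSet G // IsD m I} → ℂ)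
    (c : {I : IndepSet G // IsC m I} → ℂ) :
    ∃ y : FockSpace G, supercharge G y = 0 ∧ (∀ I (hI : IsD m I), y I = d ⟨I, hI⟩) ∧
      (∀ I (hI : IsC m I), y I = c ⟨I, hI⟩) := by
  obtain ⟨y₁, -, hy₁⟩ := hm.surj d
  obtain ⟨e₀, he₀⟩ : ∃ e₀ : FockSpace G,
    e₀ = extz (IsC m) (c - resz (IsC m) (supercharge G y₁)) := ⟨_, rfl⟩
  obtain ⟨y₀, hy₀, hy₀'⟩ := hm.surj (resz (IsD m) (supercharge G e₀))
  obtain ⟨ζ, hζ⟩ : ∃ ζ : FockSpace G,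
    ζ = mask (fun k => if k + 1 = n + 1 then 1 else 0) (e₀ - y₀) := ⟨_, rfl⟩
  have hζD : ∀ I, IsD m I → ζ I = 0 := by
    intro I hI
    have h1 : e₀ I = 0 := he₀ ▸ extz_neg _ (fun h => not_D_of_C h hI)
    have h2 : y₀ I = 0 := hy₀ I (not_U_of_D hI)
    rw [hζ, mask_apply, PiLp.sub_apply, h1, h2, sub_zero, mul_zero]
  have hζC : ∀ I (hI : IsC m I), ζ I = c ⟨I, hI⟩ - supercharge G y₁ I := by
    intro I hI
    have h1 : e₀ I = c ⟨I, hI⟩ - supercharge G y₁ I := by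
      rw [he₀, extz_pos _ hI]
      rfl
    have h2 : y₀ I = 0 := hy₀ I (not_U_of_C hI)
    rw [hζ, mask_apply, PiLp.sub_apply, h1, h2, sub_zero, hm.crit I.car I.ind hI, if_pos rfl, one_mul]
  have hQζ : supercharge G ζ = mask (fun k => if k = n + 1 then 1 else 0)
      (supercharge G (e₀ - y₀)) := by
    rw [hζ, supercharge_mask]
  have hQζ0 : supercharge G ζ = 0 := by
    apply hm.key2
    · intro I hI
      rw [hQζ, mask_apply, map_sub, PiLp.sub_apply, hy₀' I hI, resz_apply, sub_self, mul_zero]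
    · intro I hI
      rw [hQζ, mask_apply, hm.crit I.car I.ind hI, if_neg (by omega), zero_mul]
    · intro J _
      rw [supercharge_sq]
      rfl
  refine ⟨ζ + supercharge G y₁, ?_, ?_, ?_⟩
  · rw [map_add, hQζ0, supercharge_sq, add_zero]
  · intro I hI
    rw [PiLp.add_apply, hζD I hI, hy₁ I hI, zero_add]
  · intro I hI
    rw [PiLp.add_apply, hζC I hI, sub_add_cancel]

open Classical in
lemma Matching.finrank (hm : Matching G m f n) :
    Module.finrank ℂ (LinearMap.ker (hamiltonian G)) =
      Fintype.card {I : IndepSet G // IsC m I} := by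
  have h1 := finrank_ker_hamiltonian (G := G)
  have h2 := LinearMap.finrank_range_add_finrank_ker (supercharge G)
  have h3 : Module.finrank ℂ (FockSpace G) = Fintype.card (IndepSet G) := by simp
  have h4 : Fintype.card (IndepSet G) = Fintype.card {I : IndepSet G // IsU m I} +
      (Fintype.card {I : IndepSet G // IsD m I} + Fintype.card {I : IndepSet G // IsC m I}) := by
    rw [Fintype.card_subtype, Fintype.card_subtype, Fintype.card_subtype,
      ← Finset.card_union_of_disjoint, ← Finset.card_union_of_disjoint, ← Finset.card_univ]
    · congr 1
      ext I
      have := cell_cases m I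
      simpa using this
    · rw [Finset.disjoint_left]
      intro I hI hI'
      simp only [Finset.mem_union, Finset.mem_filter, Finset.mem_univ, true_and] at hI hI'
      rcases hI' with h | h
      · exact not_U_of_D h hI
      · exact not_U_of_C h hI
    · rw [Finset.disjoint_left]
      intro I hI hI'
      simp only [Finset.mem_filter, Finset.mem_univ, true_and] at hI hI'
      exact not_D_of_C hI' hI
  have h5 := hm.card_UD
  have h6 : Fintype.card {I : IndepSet G // IsD m I} ≤
      Module.finrank ℂ (LinearMap.range (supercharge G)) := by
    rw [← Module.finrank_fintype_fun_eq_card ℂ]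
    refine LinearMap.finrank_le_finrank_of_surjective
      (f := (resz (IsD m)) ∘ₗ (LinearMap.range (supercharge G)).subtype) ?_
    intro d
    obtain ⟨y, -, hy⟩ := hm.surj d
    exact ⟨⟨supercharge G y, y, rfl⟩, funext fun I => hy I.1 I.2⟩
  have h7 : Fintype.card {I : IndepSet G // IsD m I} + Fintype.card {I : IndepSet G // IsC m I} ≤
      Module.finrank ℂ (LinearMap.ker (supercharge G)) := by
    rw [← Module.finrank_fintype_fun_eq_card ℂ, ← Module.finrank_fintype_fun_eq_card ℂ,
      ← Module.finrank_prod]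
    refine LinearMap.finrank_le_finrank_of_surjective
      (f := ((resz (IsD m)).prod (resz (IsC m))) ∘ₗ (LinearMap.ker (supercharge G)).subtype) ?_
    rintro ⟨d, c⟩
    obtain ⟨y, hy, hd, hc⟩ := hm.surj_ker d c
    exact ⟨⟨y, hy⟩, Prod.ext (funext fun I => hd I.1 I.2) (funext fun I => hc I.1 I.2)⟩
  omega

open Classical in
lemma Matching.number (hm : Matching G m f n) (ψ : FockSpace G)
    (hψ : ψ ∈ LinearMap.ker (hamiltonian G)) : numberOp G ψ = (n : ℂ) • ψ := by
  obtain ⟨hQ, hQ'⟩ := (mem_ker_hamiltonian ψ).1 hψ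
  obtain ⟨y, -, hy⟩ := hm.surj (resz (IsD m) ψ)
  let p : ℕ → ℂ := fun k => if k + 1 = n + 1 then 0 else 1
  have hR : mask p (ψ - supercharge G y) = 0 := by
    have hQR : supercharge G (mask p (ψ - supercharge G y)) = 0 := by
      have := supercharge_mask (fun k => if k = n + 1 then 0 else 1) (ψ - supercharge G y)
      refine this.symm.trans ?_
      rw [map_sub, hQ, supercharge_sq, sub_zero]
      ext I
      rw [mask_apply]
      simp
    apply hm.key2
    · intro I hI
      rw [mask_apply, PiLp.sub_apply, hy I hI, resz_apply, sub_self, mul_zero]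
    · intro I hI
      rw [mask_apply, hm.crit I.car I.ind hI]
      simp [p]
    · intro J _
      rw [hQR]
      rfl
  have hR2 : mask p ψ = supercharge G (mask (fun k => p (k + 1)) y) := by
    rw [← supercharge_mask]
    ext I
    have := congrArg (fun χ : FockSpace G => χ I) hR
    simp only [mask_apply, PiLp.sub_apply] at this ⊢
    simp only [PiLp.zero_apply] at this
    linear_combination this
  have hin : inner ℂ ψ (mask p ψ) = 0 := by
    rw [hR2, ← LinearMap.adjoint_inner_left, hQ', inner_zero_left]
  have hin2 : inner ℂ (mask p ψ) (mask p ψ) = inner ℂ ψ (mask p ψ) := by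
    simp only [PiLp.inner_apply, mask_apply]
    refine Finset.sum_congr rfl fun I _ => ?_
    by_cases h : I.car.card = n
    · simp [p, h]
    · simp only [p, Nat.add_right_cancel_iff, h, if_false, one_mul]
  rw [hin, inner_self_eq_zero] at hin2
  ext I
  have h0 := congrArg (fun χ : FockSpace G => χ I) hin2
  simp only [mask_apply, PiLp.zero_apply] at h0
  change (I.car.card : ℂ) * ψ I = n * ψ I
  by_cases h : I.car.card = n
  · rw [h]
  · have : ψ I = 0 := by simpa [p, h] using h0
    rw [this, mul_zero, mul_zero]

lemma lo_mem_insert {I : Finset V} {v x : V} : x ∈ insert v I ↔ x = v ∨ x ∈ I :=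
  Finset.mem_insert

lemma lo_mem_erase {I : Finset V} {v x : V} : x ∈ I.erase v ↔ x ≠ v ∧ x ∈ I :=
  Finset.mem_erase

end Abstract

/-! ### The matching on the torus octagon-square lattice -/

section Concrete

set_option linter.unusedSectionVars false

variable {M L : ℕ} [NeZero M] [NeZero L]

lemma adj_zero {i : Fin M} {j : Fin L} {b : Fin M × Fin L × Fin 4}
    (h : (octTorus M L).Adj (i, j, 0) b) :
    b = (i, j, 1) ∨ b = (i, j, 3) ∨ b = (i, j - 1, 2) := by
  obtain ⟨i', j', k⟩ := b
  simp only [octTorus, octTorusE] at h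
  fin_cases k <;> simp at h ⊢
  · tauto
  · obtain ⟨h1, h2⟩ := h
    subst h1 h2
    simp
  · tauto

lemma adj_one {i : Fin M} {j : Fin L} {b : Fin M × Fin L × Fin 4}
    (h : (octTorus M L).Adj (i, j, 1) b) :
    b = (i, j, 0) ∨ b = (i, j, 2) ∨ b = (i + 1, j, 3) := by
  obtain ⟨i', j', k⟩ := b
  simp only [octTorus, octTorusE] at h
  fin_cases k <;> simp at h ⊢ <;> tauto

lemma adj_three {i : Fin M} {j : Fin L} {b : Fin M × Fin L × Fin 4}
    (h : (octTorus M L).Adj (i + 1, j, 3) b) :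
    b = (i + 1, j, 0) ∨ b = (i + 1, j, 2) ∨ b = (i, j, 1) := by
  obtain ⟨i', j', k⟩ := b
  simp only [octTorus, octTorusE] at h
  fin_cases k <;> simp at h ⊢ <;> tauto

lemma adj01 (i : Fin M) (j : Fin L) : (octTorus M L).Adj (i, j, 0) (i, j, 1) := by
  simp [octTorus, octTorusE]
lemma adj03 (i : Fin M) (j : Fin L) : (octTorus M L).Adj (i, j, 0) (i, j, 3) := by
  simp [octTorus, octTorusE]
lemma adj21 (i : Fin M) (j : Fin L) : (octTorus M L).Adj (i, j, 2) (i, j, 1) := by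
  simp [octTorus, octTorusE]
lemma adj23 (i : Fin M) (j : Fin L) : (octTorus M L).Adj (i, j, 2) (i, j, 3) := by
  simp [octTorus, octTorusE]
lemma adj13 (i : Fin M) (j : Fin L) : (octTorus M L).Adj (i, j, 1) (i + 1, j, 3) := by
  simp [octTorus, octTorusE]
lemma adj20 (i : Fin M) (j : Fin L) : (octTorus M L).Adj (i, j, 2) (i, j + 1, 0) := by
  simp [octTorus, octTorusE]

/-- The plaquette has an occupied site of type 0 or 2. -/
def vert (I : Finset (Fin M × Fin L × Fin 4)) (p : Fin M × Fin L) : Prop :=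
  (p.1, p.2, 0) ∈ I ∨ (p.1, p.2, 2) ∈ I

/-- Horizontal links at which a toggle is possible. -/
def badL (I : Finset (Fin M × Fin L × Fin 4)) (p : Fin M × Fin L) : Prop :=
  (¬ vert I p ∧ (p.1 + 1, p.2, 3) ∉ I) ∨ (vert I p ∧ ¬ vert I (p.1 + 1, p.2))

/-- Plaquettes at which a vertical toggle is possible. -/
def badP (I : Finset (Fin M × Fin L × Fin 4)) (p : Fin M × Fin L) : Prop :=
  (p.1, p.2, 2) ∈ I ∧ (p.1, p.2 - 1, 2) ∉ I

/-- Linear index of a plaquette. -/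
def idx (p : Fin M × Fin L) : ℕ := (finProdFinEquiv p).val

lemma idx_inj {p q : Fin M × Fin L} (h : idx p = idx q) : p = q :=
  finProdFinEquiv.injective (Fin.ext h)

lemma exists_first (P : Fin M × Fin L → Prop) (h : ∃ p, P p) :
    ∃ p, P p ∧ ∀ q, P q → idx p ≤ idx q := by
  classical
  obtain ⟨p, hp, hmin⟩ := Finset.exists_min_image (Finset.univ.filter P) idx
    (by obtain ⟨p, hp⟩ := h; exact ⟨p, by simpa using hp⟩)
  exact ⟨p, by simpa using hp, fun q hq => hmin q (by simpa using hq)⟩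

/-- The first plaquette with a given property. -/
noncomputable def firstOf (P : Fin M × Fin L → Prop) (h : ∃ p, P p) : Fin M × Fin L :=
  (exists_first P h).choose

lemma firstOf_mem {P : Fin M × Fin L → Prop} (h : ∃ p, P p) : P (firstOf P h) :=
  (exists_first P h).choose_spec.1

lemma firstOf_le {P : Fin M × Fin L → Prop} (h : ∃ p, P p) {q : Fin M × Fin L} (hq : P q) :
    idx (firstOf P h) ≤ idx q :=
  (exists_first P h).choose_spec.2 q hq

open Classical in
/-- The vertex toggled at a link. -/
noncomputable def tv (a : Fin M × Fin L → Prop) (p : Fin M × Fin L) : Fin M × Fin L × Fin 4 :=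
  if a p then (p.1 + 1, p.2, 3) else (p.1, p.2, 1)

open Classical in
/-- The vertex to toggle, in terms of the three predicates. -/
noncomputable def mm (a b c : Fin M × Fin L → Prop) : Option (Fin M × Fin L × Fin 4) :=
  if h : ∃ p, b p then some (tv a (firstOf b h))
  else if h : ∃ p, c p then some ((firstOf c h).1, (firstOf c h).2, 0) else none

/-- The matching. -/
noncomputable def om (I : Finset (Fin M × Fin L × Fin 4)) : Option (Fin M × Fin L × Fin 4) :=
  mm (vert I) (badL I) (badP I)

lemma mm_pos {a b c : Fin M × Fin L → Prop} (h : ∃ p, b p) :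
    mm a b c = some (tv a (firstOf b h)) := by
  simp [mm, h]

lemma mm_neg {a b c : Fin M × Fin L → Prop} (h : ¬ ∃ p, b p) (h' : ∃ p, c p) :
    mm a b c = some ((firstOf c h').1, (firstOf c h').2, 0) := by
  simp only [mm, h, h', dif_pos, dif_neg, not_false_eq_true]

lemma mm_none {a b c : Fin M × Fin L → Prop} (h : ¬ ∃ p, b p) (h' : ¬ ∃ p, c p) :
    mm a b c = none := by
  simp only [mm, h, h', dif_neg, not_false_eq_true]

lemma om_cases (I : Finset (Fin M × Fin L × Fin 4)) {v : Fin M × Fin L × Fin 4}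
    (h : om I = some v) :
    (∃ hb : ∃ p, badL I p, v = tv (vert I) (firstOf _ hb)) ∨
    ((¬ ∃ p, badL I p) ∧ ∃ hc : ∃ p, badP I p, v = ((firstOf _ hc).1, (firstOf _ hc).2, 0)) := by
  unfold om at h
  by_cases hb : ∃ p, badL I p
  · rw [mm_pos hb] at h
    exact Or.inl ⟨hb, (Option.some.inj h).symm⟩
  · by_cases hc : ∃ p, badP I p
    · rw [mm_neg hb hc] at h
      exact Or.inr ⟨hb, hc, (Option.some.inj h).symm⟩
    · rw [mm_none hb hc] at h
      cases h

lemma tv_pos {a : Fin M × Fin L → Prop} {p : Fin M × Fin L} (h : a p) :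
    tv a p = (p.1 + 1, p.2, 3) := by
  simp [tv, h]

lemma tv_neg {a : Fin M × Fin L → Prop} {p : Fin M × Fin L} (h : ¬ a p) :
    tv a p = (p.1, p.2, 1) := by
  simp [tv, h]

lemma tv_type (a : Fin M × Fin L → Prop) (p : Fin M × Fin L) :
    (tv a p).2.2 = 1 ∨ (tv a p).2.2 = 3 := by
  by_cases h : a p
  · rw [tv_pos h]; simp
  · rw [tv_neg h]; simp

lemma om_congr {I I' : Finset (Fin M × Fin L × Fin 4)} (h1 : ∀ p, vert I p ↔ vert I' p)
    (h2 : ∀ p, badL I p ↔ badL I' p) (h3 : (∃ p, badL I p) ∨ ∀ p, badP I p ↔ badP I' p) :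
    om I = om I' := by
  have e1 : vert I = vert I' := funext fun p => propext (h1 p)
  have e2 : badL I = badL I' := funext fun p => propext (h2 p)
  rcases h3 with h3 | h3
  · unfold om
    rw [e1, e2] at *
    rw [mm_pos h3, mm_pos h3]
  · have e3 : badP I = badP I' := funext fun p => propext (h3 p)
    unfold om
    rw [e1, e2, e3]

lemma vert_congr {I I' : Finset (Fin M × Fin L × Fin 4)}
    (h0 : ∀ i j, (i, j, 0) ∈ I ↔ (i, j, 0) ∈ I')
    (h2 : ∀ i j, (i, j, 2) ∈ I ↔ (i, j, 2) ∈ I') (p) : vert I p ↔ vert I' p := by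
  unfold vert
  rw [h0, h2]

/-- Toggling the matched vertex does not change the matched vertex. -/
lemma om_toggle {I I' : Finset (Fin M × Fin L × Fin 4)} {v : Fin M × Fin L × Fin 4}
    (h : om I = some v) (hx : ∀ x, x ≠ v → (x ∈ I ↔ x ∈ I')) : om I' = some v := by
  rw [← h]
  symm
  rcases om_cases I h with ⟨hb, hv⟩ | ⟨hb, hc, hv⟩
  · have hp := firstOf_mem hb
    generalize firstOf (badL I) hb = p at hp hv
    have ht := tv_type (vert I) p
    rw [← hv] at ht
    have hvert : ∀ q, vert I q ↔ vert I' q := by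
      apply vert_congr
      · intro i j
        apply hx
        rintro rfl
        simp at ht
      · intro i j
        apply hx
        rintro rfl
        simp at ht
    refine om_congr hvert ?_ (Or.inl hb)
    intro q
    unfold badL
    rw [← hvert, ← hvert]
    by_cases hq : (q.1 + 1, q.2, (3 : Fin 4)) = v
    · have : vert I q := by
        by_cases hvp : vert I p
        · rw [tv_pos hvp] at hv
          rw [← hq] at hv
          simp only [Prod.mk.injEq, add_left_inj, and_true] at hv
          have : q = p := Prod.ext hv.1 hv.2
          rwa [this]
        · rw [tv_neg hvp] at hv
          rw [← hq] at hv
          simp at hv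
      simp [this]
    · rw [hx _ hq]
  · have hp := firstOf_mem hc
    generalize firstOf (badP I) hc = p at hp hv
    have h2 : ∀ i j, (i, j, 2) ∈ I ↔ (i, j, 2) ∈ I' := by
      intro i j
      apply hx
      rw [hv]
      simp
    have hvert : ∀ q, vert I q ↔ vert I' q := by
      intro q
      by_cases hq : q = p
      · have e1 : vert I q := Or.inr (hq ▸ hp.1)
        have e2 : vert I' q := Or.inr ((h2 _ _).1 (hq ▸ hp.1))
        simp [e1, e2]
      · unfold vert
        rw [h2, hx]
        rw [hv]
        intro h
        apply hq
        simp only [Prod.mk.injEq, and_true] at h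
        exact Prod.ext h.1 h.2
    refine om_congr hvert ?_ (Or.inr ?_)
    · intro q
      unfold badL
      rw [← hvert, ← hvert, hx]
      rw [hv]
      simp
    · intro q
      unfold badP
      rw [h2, h2]

lemma not_vert_of_one {I : Finset (Fin M × Fin L × Fin 4)} (hI : Indep (octTorus M L) I)
    {i : Fin M} {j : Fin L} (h : (i, j, 1) ∈ I) : ¬ vert I (i, j) := by
  rintro (h' | h')
  · exact hI h' h (adj01 i j)
  · exact hI h' h (adj21 i j)

lemma not_vert_of_three {I : Finset (Fin M × Fin L × Fin 4)} (hI : Indep (octTorus M L) I)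
    {i : Fin M} {j : Fin L} (h : (i, j, 3) ∈ I) : ¬ vert I (i, j) := by
  rintro (h' | h')
  · exact hI h' h (adj03 i j)
  · exact hI h' h (adj23 i j)

/-- The matched vertex can be inserted. -/
lemma om_free {I : Finset (Fin M × Fin L × Fin 4)} (hI : Indep (octTorus M L) I)
    {v : Fin M × Fin L × Fin 4} (h : om I = some v) :
    ∀ b ∈ I, ¬ (octTorus M L).Adj v b := by
  intro b hb hadj
  rcases om_cases I h with ⟨hbad, hv⟩ | ⟨hbad, hc, hv⟩
  · have hp := firstOf_mem hbad
    generalize firstOf (badL I) hbad = p at hp hv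
    obtain ⟨i, j⟩ := p
    rcases hp with ⟨h1, h2⟩ | ⟨h1, h2⟩
    · rw [tv_neg h1] at hv
      subst hv
      rcases adj_one hadj with rfl | rfl | rfl
      · exact h1 (Or.inl hb)
      · exact h1 (Or.inr hb)
      · exact h2 hb
    · rw [tv_pos h1] at hv
      subst hv
      rcases adj_three hadj with rfl | rfl | rfl
      · exact h2 (Or.inl hb)
      · exact h2 (Or.inr hb)
      · exact not_vert_of_one hI hb h1
  · have hp := firstOf_mem hc
    generalize firstOf (badP I) hc = p at hp hv
    obtain ⟨i, j⟩ := p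
    subst hv
    rcases adj_zero hadj with rfl | rfl | rfl
    · exact not_vert_of_one hI hb (Or.inr hp.1)
    · exact not_vert_of_three hI hb (Or.inr hp.1)
    · exact hp.2 hb

/-- Number of sites of types 0 and 2. -/
def sig (I : Finset (Fin M × Fin L × Fin 4)) : ℕ :=
  (I.filter fun x => x.2.2 = 0 ∨ x.2.2 = 2).card

/-- Number of sites of type 2. -/
def two (I : Finset (Fin M × Fin L × Fin 4)) : ℕ := (I.filter fun x => x.2.2 = 2).card

open Classical in
/-- The potential. -/
noncomputable def pot (I : Finset (Fin M × Fin L × Fin 4)) : ℕ ×ₗ ℕ ×ₗ ℕ :=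
  if h : ∃ p, badL I p then toLex (sig I, toLex (0, idx (firstOf _ h)))
  else toLex (sig I + 1, toLex (1, two I))

lemma pot_pos {I : Finset (Fin M × Fin L × Fin 4)} (h : ∃ p, badL I p) :
    pot I = toLex (sig I, toLex (0, idx (firstOf _ h))) := by
  simp only [pot, h, dif_pos]

lemma pot_neg {I : Finset (Fin M × Fin L × Fin 4)} (h : ¬ ∃ p, badL I p) :
    pot I = toLex (sig I + 1, toLex (1, two I)) := by
  simp only [pot, h, dif_neg, not_false_eq_true]

lemma card_filter_del {I J : Finset (Fin M × Fin L × Fin 4)} {w : Fin M × Fin L × Fin 4}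
    (hx : ∀ x, x ∈ I ↔ x ≠ w ∧ x ∈ J) (hw : w ∈ J) (P : Fin M × Fin L × Fin 4 → Prop)
    [DecidablePred P] (hP : P w) : (I.filter P).card + 1 = (J.filter P).card := by
  classical
  have : J.filter P = insert w (I.filter P) := by
    ext x
    simp only [Finset.mem_filter, Finset.mem_insert, hx]
    by_cases h : x = w
    · subst h; simp [hw, hP]
    · simp [h]
  rw [this, Finset.card_insert_of_notMem (by simp [hx])]

lemma card_filter_del' {I J : Finset (Fin M × Fin L × Fin 4)} {w : Fin M × Fin L × Fin 4}
    (hx : ∀ x, x ∈ I ↔ x ≠ w ∧ x ∈ J) (P : Fin M × Fin L × Fin 4 → Prop)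
    [DecidablePred P] (hP : ¬ P w) : (I.filter P).card = (J.filter P).card := by
  congr 1
  ext x
  simp only [Finset.mem_filter, hx]
  by_cases h : x = w
  · subst h; simp [hP]
  · simp [h]

lemma fin4_cases (k : Fin 4) : (k = 0 ∨ k = 2) ∨ (k = 1 ∨ k = 3) := by
  fin_cases k <;> simp

lemma om_acyc {J K I : Finset (Fin M × Fin L × Fin 4)} (hJ : Indep (octTorus M L) J)
    {v w u : Fin M × Fin L × Fin 4} (hv : om J = some v) (hvJ : v ∈ J) (hwJ : w ∈ J)
    (hwv : w ≠ v) (hK : ∀ x, x ∈ K ↔ x ≠ v ∧ x ∈ J) (hI : ∀ x, x ∈ I ↔ x ≠ w ∧ x ∈ J)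
    (hu : om I = some u) (huI : u ∉ I) : pot I < pot K := by
  have huv : u ≠ v := by
    rintro rfl
    exact huI ((hI _).2 ⟨Ne.symm hwv, hvJ⟩)
  have homne : om I ≠ om J := by
    rw [hu, hv]
    exact fun h => huv (Option.some.inj h)
  -- removing a horizontal site
  have hH : (w.2.2 = 1 ∨ w.2.2 = 3) → ∀ p, vert J p ↔ vert I p := by
    intro hw
    apply vert_congr
    · intro i j
      rw [hI]
      constructor
      · intro h
        refine ⟨?_, h⟩
        rintro rfl
        simp at hw
      · exact fun h => h.2
    · intro i j
      rw [hI]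
      constructor
      · intro h
        refine ⟨?_, h⟩
        rintro rfl
        simp at hw
      · exact fun h => h.2
  have hmono : (w.2.2 = 1 ∨ w.2.2 = 3) → ∀ p, badL J p → badL I p := by
    intro hw p hp
    unfold badL at hp ⊢
    rw [← hH hw, ← hH hw]
    rcases hp with hp | hp
    · exact Or.inl ⟨hp.1, fun h => hp.2 ((hI _).1 h).2⟩
    · exact Or.inr hp
  have hKm : ∀ x, x ≠ v → (x ∈ J ↔ x ∈ K) := fun x hx => by simp [hK, hx]
  have homK : om K = some v := om_toggle hv hKm
  have hsig1 : (w.2.2 = 0 ∨ w.2.2 = 2) → sig I + 1 = sig J := fun hw =>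
    card_filter_del hI hwJ _ hw
  have hsig2 : (w.2.2 = 1 ∨ w.2.2 = 3) → sig I = sig J := fun hw => by
    refine card_filter_del' hI _ ?_
    rcases hw with hw | hw <;> simp [hw]
  rcases om_cases J hv with ⟨hb, hvb⟩ | ⟨hb, hc, hvc⟩
  · -- stage 1
    have hvt := tv_type (vert J) (firstOf _ hb)
    rw [← hvb] at hvt
    have hsK : sig K = sig J := by
      refine card_filter_del' hK _ ?_
      rcases hvt with hw | hw <;> simp [hw]
    have hbK : ∃ p, badL K p := by
      by_contra hbK
      rcases om_cases K homK with ⟨h, -⟩ | ⟨-, h, h'⟩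
      · exact hbK h
      · rw [h'] at hvt
        simp at hvt
    have hfirst : badL K = badL J := by
      funext q
      apply propext
      have hvert : ∀ q, vert K q ↔ vert J q := by
        apply vert_congr
        · intro i j
          rw [← hKm]
          rintro rfl
          simp at hvt
        · intro i j
          rw [← hKm]
          rintro rfl
          simp at hvt
      unfold badL
      rw [hvert, hvert]
      by_cases hq : (q.1 + 1, q.2, (3 : Fin 4)) = v
      · have : vert J q := by
          by_cases hvp : vert J (firstOf _ hb)
          · rw [tv_pos hvp, ← hq] at hvb
            simp only [Prod.mk.injEq, add_left_inj, and_true] at hvb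
            have : q = firstOf _ hb := Prod.ext hvb.1 hvb.2
            rwa [this]
          · rw [tv_neg hvp, ← hq] at hvb
            simp at hvb
        simp [this]
      · rw [← hKm _ hq]
    have hpK : pot K = toLex (sig J, toLex (0, idx (firstOf _ hb))) := by
      rw [pot_pos hbK, hsK]
      simp only [hfirst]
    rw [hpK]
    by_cases hbI : ∃ p, badL I p
    · rw [pot_pos hbI]
      rcases fin4_cases w.2.2 with hw | hw
      · have := hsig1 hw
        rw [Prod.Lex.toLex_lt_toLex]
        left
        dsimp only
        omega
      · rw [hsig2 hw, Prod.Lex.toLex_lt_toLex]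
        right
        refine ⟨rfl, ?_⟩
        rw [Prod.Lex.toLex_lt_toLex]
        right
        refine ⟨rfl, ?_⟩
        dsimp only
        refine lt_of_le_of_ne (firstOf_le hbI (hmono hw _ (firstOf_mem hb))) ?_
        intro he
        have he := idx_inj he
        apply homne
        unfold om
        rw [mm_pos hbI, mm_pos hb, he]
        have : vert J = vert I := funext fun p => propext (hH hw p)
        rw [this]
    · exfalso
      rcases fin4_cases w.2.2 with hw | hw
      · have hvert : ∀ p, vert J p ↔ vert I p := by
          intro p
          constructor
          · intro hp
            by_contra hp'
            have hwp : w.1 = p.1 ∧ w.2.1 = p.2 := by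
              by_contra hne
              apply hp'
              rcases hp with hp | hp
              · exact Or.inl ((hI _).2 ⟨by rintro rfl; simp at hne, hp⟩)
              · exact Or.inr ((hI _).2 ⟨by rintro rfl; simp at hne, hp⟩)
            apply hbI
            refine ⟨(p.1 - 1, p.2), ?_⟩
            by_cases hv1 : vert I (p.1 - 1, p.2)
            · right
              refine ⟨hv1, ?_⟩
              simpa using hp'
            · left
              refine ⟨hv1, ?_⟩
              simp only [sub_add_cancel]
              intro h3
              exact not_vert_of_three hJ ((hI _).1 h3).2 hp
          · rintro (h | h)
            · exact Or.inl ((hI _).1 h).2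
            · exact Or.inr ((hI _).1 h).2
        obtain ⟨p, hp⟩ := hb
        apply hbI
        refine ⟨p, ?_⟩
        unfold badL at hp ⊢
        rw [← hvert, ← hvert]
        rcases hp with hp | hp
        · exact Or.inl ⟨hp.1, fun h => hp.2 ((hI _).1 h).2⟩
        · exact Or.inr hp
      · obtain ⟨p, hp⟩ := hb
        exact hbI ⟨p, hmono hw p hp⟩
  · -- stage 2
    have hvt : v.2.2 = 0 := by rw [hvc]
    have hsK : sig K + 1 = sig J := card_filter_del hK hvJ _ (Or.inl hvt)
    have htK : two K = two J := card_filter_del' hK _ (by simp [hvt])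
    have hbK : ¬ ∃ p, badL K p := by
      intro hbK
      rcases om_cases K homK with ⟨h, h'⟩ | ⟨h, -⟩
      · have := tv_type (vert K) (firstOf _ h)
        rw [← h', hvt] at this
        simp at this
      · exact h hbK
    rw [pot_neg hbK, hsK, htK]
    have hle : sig I ≤ sig J := by
      rcases fin4_cases w.2.2 with hw | hw
      · have := hsig1 hw
        omega
      · exact (hsig2 hw).le
    by_cases hbI : ∃ p, badL I p
    · rw [pot_pos hbI, Prod.Lex.toLex_lt_toLex]
      rcases hle.lt_or_eq with hlt | heq
      · exact Or.inl hlt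
      · right
        refine ⟨heq, ?_⟩
        rw [Prod.Lex.toLex_lt_toLex]
        exact Or.inl Nat.zero_lt_one
    · rw [pot_neg hbI]
      obtain ⟨i, j, k⟩ := w
      rcases fin4_cases k with (hw | hw) | (hw | hw)
      · exfalso
        subst hw
        apply homne
        have h2 : ∀ i j, (i, j, 2) ∈ I ↔ (i, j, 2) ∈ J := by
          intro i' j'
          simp [hI]
        unfold om
        rcases om_cases I hu with ⟨h, -⟩ | ⟨-, hc', -⟩
        · exact absurd h hbI
        · rw [mm_neg hbI hc', mm_neg hb hc]
          have : badP I = badP J := by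
            funext q
            unfold badP
            rw [h2, h2]
          simp only [this]
      · have h1 := hsig1 (Or.inr hw)
        have h2 : two I + 1 = two J := card_filter_del hI hwJ _ hw
        rw [h1, Prod.Lex.toLex_lt_toLex]
        right
        refine ⟨rfl, ?_⟩
        rw [Prod.Lex.toLex_lt_toLex]
        right
        refine ⟨rfl, ?_⟩
        dsimp only
        omega
      · exfalso
        subst hw
        apply hb
        refine ⟨(i, j), Or.inl ⟨not_vert_of_one hJ hwJ, ?_⟩⟩
        intro h
        exact hJ hwJ h (adj13 i j)
      · exfalso
        subst hw
        apply hbI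
        have hv3 := not_vert_of_three hJ hwJ
        rw [hH (Or.inr rfl)] at hv3
        refine ⟨(i - 1, j), ?_⟩
        by_cases hv1 : vert I (i - 1, j)
        · right
          refine ⟨hv1, ?_⟩
          simpa using hv3
        · left
          refine ⟨hv1, ?_⟩
          simp [hI]

lemma cyc {n : ℕ} [NeZero n] (P : Fin n → Prop) (h : ∀ i, P i → P (i + 1)) (i₀ : Fin n)
    (h0 : P i₀) (i : Fin n) : P i := by
  have key : ∀ k : ℕ, P (i₀ + Fin.ofNat n k) := by
    intro k
    induction k with
    | zero =>
      have : i₀ + Fin.ofNat n 0 = i₀ := by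
        apply Fin.ext
        simp
      rwa [this]
    | succ k ih =>
      have : i₀ + Fin.ofNat n (k + 1) = i₀ + Fin.ofNat n k + 1 := by
        apply Fin.ext
        simp [Fin.val_add, add_assoc]
      rw [this]
      exact h _ ih
  have := key (i - i₀).val
  have e : Fin.ofNat n (i - i₀).val = i - i₀ := by
    apply Fin.ext
    simp [Fin.ofNat, Nat.mod_eq_of_lt (i - i₀).2]
  rw [e, add_sub_cancel] at this
  exact this

lemma om_eq_none (I : Finset (Fin M × Fin L × Fin 4)) :
    om I = none ↔ (∀ p, ¬ badL I p) ∧ ∀ p, ¬ badP I p := by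
  constructor
  · intro h
    by_cases hb : ∃ p, badL I p
    · rw [om, mm_pos hb] at h
      cases h
    · by_cases hc : ∃ p, badP I p
      · rw [om, mm_neg hb hc] at h
        cases h
      · exact ⟨not_exists.1 hb, not_exists.1 hc⟩
  · rintro ⟨h1, h2⟩
    exact mm_none (not_exists.2 h1) (not_exists.2 h2)

/-- The configuration with exactly one particle on each plaquette, at position `k p`. -/
def gr (k : Fin M × Fin L → Fin 4) : Finset (Fin M × Fin L × Fin 4) :=
  Finset.univ.map ⟨fun p => (p.1, p.2, k p), fun p q h => by
    simp only [Prod.mk.injEq] at h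
    exact Prod.ext h.1 h.2.1⟩

lemma mem_gr (k : Fin M × Fin L → Fin 4) (i : Fin M) (j : Fin L) (c : Fin 4) :
    (i, j, c) ∈ gr k ↔ k (i, j) = c := by
  simp only [gr, Finset.mem_map, Finset.mem_univ, true_and]
  constructor
  · rintro ⟨⟨a, b⟩, h⟩
    change (a, b, k (a, b)) = (i, j, c) at h
    simp only [Prod.mk.injEq] at h
    obtain ⟨rfl, rfl, h⟩ := h
    exact h
  · rintro rfl
    exact ⟨(i, j), rfl⟩

lemma card_gr (k : Fin M × Fin L → Fin 4) : (gr k).card = M * L := by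
  simp [gr]

lemma gr_inj : Function.Injective (gr : (Fin M × Fin L → Fin 4) → _) := by
  intro k k' h
  funext ⟨i, j⟩
  have : (i, j, k (i, j)) ∈ gr k := (mem_gr _ _ _ _).2 rfl
  rw [h, mem_gr] at this
  exact this.symm

/-- Row-type critical configurations. -/
def kA (S : Finset (Fin L)) (p : Fin M × Fin L) : Fin 4 := if p.2 ∈ S then 0 else 3

/-- Column-type critical configurations. -/
def kB (T : Finset (Fin M)) (p : Fin M × Fin L) : Fin 4 := if p.1 ∈ T then 2 else 0

lemma indep_of_E {I : Finset (Fin M × Fin L × Fin 4)}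
    (h : ∀ a ∈ I, ∀ b ∈ I, ¬ octTorusE M L a b) : Indep (octTorus M L) I := by
  rintro a ha b hb ⟨-, hab | hab⟩
  · exact h a ha b hb hab
  · exact h b hb a ha hab

lemma indep_gr (k : Fin M × Fin L → Fin 4)
    (h1 : ∀ i j, k (i, j) = 1 → k (i + 1, j) = 3 → False)
    (h2 : ∀ i j, k (i, j) = 2 → k (i, j + 1) = 0 → False) : Indep (octTorus M L) (gr k) := by
  apply indep_of_E
  rintro ⟨i, j, c⟩ ha ⟨i', j', c'⟩ hb hE
  rw [mem_gr] at ha hb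
  rcases hE with ⟨e1, e2, h⟩ | ⟨e1, e2, e3, e4⟩ | ⟨e1, e2, e3, e4⟩
  · dsimp only at e1 e2 h
    subst e1 e2
    rw [ha] at hb
    subst hb
    rcases h with h | h | h | h <;> · rw [h.1] at h; simp at h
  · dsimp only at e1 e2 e3 e4
    subst e1 e2 e3 e4
    exact h1 _ _ ha hb
  · dsimp only at e1 e2 e3 e4
    subst e1 e2 e3 e4
    exact h2 _ _ ha hb

lemma vert_gr (k : Fin M × Fin L → Fin 4) (p) : vert (gr k) p ↔ k p = 0 ∨ k p = 2 := by
  unfold vert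
  rw [mem_gr, mem_gr]

lemma critA (S : Finset (Fin L)) :
    Indep (octTorus M L) (gr (kA (M := M) S)) ∧ om (gr (kA (M := M) S)) = none := by
  constructor
  · apply indep_gr
    · intro i j h
      unfold kA at h
      split_ifs at h <;> simp at h
    · intro i j h
      unfold kA at h
      split_ifs at h <;> simp at h
  · rw [om_eq_none]
    constructor
    · rintro ⟨i, j⟩
      unfold badL
      rw [vert_gr, vert_gr, mem_gr]
      by_cases h : j ∈ S <;> simp [kA, h]
    · rintro ⟨i, j⟩
      unfold badP
      rw [mem_gr]
      by_cases h : j ∈ S <;> simp [kA, h]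

lemma critB (T : Finset (Fin M)) :
    Indep (octTorus M L) (gr (kB (L := L) T)) ∧ om (gr (kB (L := L) T)) = none := by
  constructor
  · apply indep_gr
    · intro i j h
      unfold kB at h
      split_ifs at h <;> simp at h
    · intro i j h h'
      unfold kB at h h'
      split_ifs at h h' <;> simp at h h'
  · rw [om_eq_none]
    constructor
    · rintro ⟨i, j⟩
      unfold badL
      rw [vert_gr, vert_gr, mem_gr]
      by_cases h : i ∈ T <;> by_cases h' : i + 1 ∈ T <;> simp [kB, h, h']
    · rintro ⟨i, j⟩
      unfold badP
      rw [mem_gr, mem_gr]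
      by_cases h : i ∈ T <;> simp [kB, h]

lemma crit_form {I : Finset (Fin M × Fin L × Fin 4)} (hI : Indep (octTorus M L) I)
    (h : om I = none) : (∃ S : Finset (Fin L), I = gr (kA S)) ∨
      ∃ T : Finset (Fin M), I = gr (kB T) := by
  classical
  obtain ⟨hL, hP⟩ := (om_eq_none I).1 h
  have hstep : ∀ j i, vert I (i, j) → vert I (i + 1, j) := by
    intro j i hi
    by_contra hc
    exact hL (i, j) (Or.inr ⟨hi, hc⟩)
  have hrow : ∀ i i' j, vert I (i, j) → vert I (i', j) := fun i i' j hi =>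
    cyc (fun i => vert I (i, j)) (hstep j) i hi i'
  have h3 : ∀ i j, ¬ vert I (i, j) → (i, j, 3) ∈ I := by
    intro i j hv
    by_contra hc
    refine hL (i - 1, j) (Or.inl ⟨fun hh => hv (hrow _ _ _ hh), ?_⟩)
    simpa using hc
  have h1 : ∀ i j, (i, j, 1) ∉ I := by
    intro i j hm
    have hv := not_vert_of_one hI hm
    exact hI hm (h3 (i + 1) j (fun hh => hv (hrow _ _ _ hh))) (adj13 i j)
  have h2step : ∀ i j, (i, j, 2) ∈ I → (i, j - 1, 2) ∈ I := by
    intro i j hm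
    by_contra hc
    exact hP (i, j) ⟨hm, hc⟩
  have hcol : ∀ i j j', (i, j, 2) ∈ I → (i, j', 2) ∈ I := by
    intro i j j' hm
    by_contra hc
    refine cyc (fun j => (i, j, 2) ∉ I) ?_ j' hc j hm
    intro j hj hj'
    apply hj
    have := h2step i _ hj'
    simpa using this
  by_cases h2 : ∃ i j, (i, j, 2) ∈ I
  · right
    obtain ⟨i₀, j₀, hm⟩ := h2
    have hall : ∀ i j, vert I (i, j) := fun i j =>
      hrow i₀ i j (Or.inr (hcol _ _ _ hm))
    refine ⟨Finset.univ.filter fun i => (i, 0, 2) ∈ I, ?_⟩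
    ext ⟨i, j, c⟩
    rw [mem_gr]
    have n3 : (i, j, 3) ∉ I := fun hh => not_vert_of_three hI hh (hall i j)
    have n1 := h1 i j
    by_cases hT : (i, 0, 2) ∈ I
    · have e2 : (i, j, 2) ∈ I := hcol _ _ _ hT
      have n0 : (i, j, 0) ∉ I := by
        intro hh
        have := adj20 i (j - 1)
        rw [sub_add_cancel] at this
        exact hI (h2step _ _ e2) hh this
      fin_cases c <;> simp [kB, hT, e2, n0, n1, n3]
    · have n2 : (i, j, 2) ∉ I := fun hh => hT (hcol _ _ _ hh)
      have e0 : (i, j, 0) ∈ I := (hall i j).resolve_right n2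
      fin_cases c <;> simp [kB, hT, e0, n1, n2, n3]
  · left
    push Not at h2
    refine ⟨Finset.univ.filter fun j => vert I (0, j), ?_⟩
    ext ⟨i, j, c⟩
    rw [mem_gr]
    have n1 := h1 i j
    have n2 := h2 i j
    by_cases hS : vert I (0, j)
    · have hv := hrow 0 i j hS
      have n3 : (i, j, 3) ∉ I := fun hh => not_vert_of_three hI hh hv
      have e0 : (i, j, 0) ∈ I := hv.resolve_right n2
      fin_cases c <;> simp [kA, hS, e0, n1, n2, n3]
    · have hv : ¬ vert I (i, j) := fun hh => hS (hrow _ _ _ hh)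
      have e3 := h3 i j hv
      have n0 : (i, j, 0) ∉ I := fun hh => hv (Or.inl hh)
      fin_cases c <;> simp [kA, hS, e3, n0, n1, n2]

lemma kA_inj : Function.Injective (kA : Finset (Fin L) → Fin M × Fin L → Fin 4) := by
  intro S S' h
  ext j
  have := congrFun h (0, j)
  by_cases h1 : j ∈ S <;> by_cases h2 : j ∈ S' <;> simp [kA, h1, h2] at this ⊢

lemma kB_inj : Function.Injective (kB : Finset (Fin M) → Fin M × Fin L → Fin 4) := by
  intro S S' h
  ext i
  have := congrFun h (i, 0)
  by_cases h1 : i ∈ S <;> by_cases h2 : i ∈ S' <;> simp [kB, h1, h2] at this ⊢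

lemma card_crit : ((Finset.univ.image (kA : Finset (Fin L) → Fin M × Fin L → Fin 4)) ∪
    (Finset.univ.image (kB : Finset (Fin M) → Fin M × Fin L → Fin 4))).card =
    2 ^ M + 2 ^ L - 1 := by
  have h := Finset.card_union_add_card_inter
    (Finset.univ.image (kA : Finset (Fin L) → Fin M × Fin L → Fin 4))
    (Finset.univ.image (kB : Finset (Fin M) → Fin M × Fin L → Fin 4))
  have hi : (Finset.univ.image (kA : Finset (Fin L) → Fin M × Fin L → Fin 4)) ∩
    (Finset.univ.image (kB : Finset (Fin M) → Fin M × Fin L → Fin 4)) = {fun _ => 0} := by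
    ext k
    simp only [Finset.mem_inter, Finset.mem_image, Finset.mem_univ, true_and,
      Finset.mem_singleton]
    constructor
    · rintro ⟨⟨S, rfl⟩, T, hT⟩
      funext ⟨i, j⟩
      have := congrFun hT (i, j)
      by_cases h1 : j ∈ S <;> by_cases h2 : i ∈ T <;> simp [kA, kB, h1, h2] at this ⊢
    · rintro rfl
      exact ⟨⟨Finset.univ, by funext p; simp [kA]⟩, ∅, by funext p; simp [kB]⟩
  rw [hi, Finset.card_image_of_injective _ kA_inj, Finset.card_image_of_injective _ kB_inj,
    Finset.card_singleton] at h
  simp only [Finset.card_univ, Fintype.card_finset, Fintype.card_fin] at h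
  omega

lemma om_matching [LinearOrder (Fin M × Fin L × Fin 4)] :
    Matching (octTorus M L) om pot (M * L) where
  ins I hI v hv := by
    constructor
    · intro a ha b hb hab
      rw [lo_mem_insert] at ha hb
      rcases ha with rfl | ha
      · rcases hb with rfl | hb
        · exact (octTorus M L).irrefl hab
        · exact om_free hI hv b hb hab
      · rcases hb with rfl | hb
        · exact om_free hI hv a ha hab.symm
        · exact hI ha hb hab
    · exact om_toggle hv (fun x hx => by rw [lo_mem_insert]; simp [hx])
  era I hI v hv := om_toggle hv (fun x hx => by rw [lo_mem_erase]; simp [hx])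
  acyc J hJ v w u hv hvJ hwJ hwv hu huI :=
    om_acyc hJ hv hvJ hwJ hwv (fun x => lo_mem_erase) (fun x => lo_mem_erase) hu huI
  crit I hI h := by
    rcases crit_form hI h with ⟨S, rfl⟩ | ⟨T, rfl⟩ <;> exact card_gr _

open Classical in
lemma card_IsC [LinearOrder (Fin M × Fin L × Fin 4)] :
    Fintype.card {I : IndepSet (octTorus M L) // IsC om I} = 2 ^ M + 2 ^ L - 1 := by
  rw [← card_crit (M := M) (L := L), ← Fintype.card_coe]
  symm
  have hk : ∀ k : ↥((Finset.univ.image (kA : Finset (Fin L) → Fin M × Fin L → Fin 4)) ∪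
    (Finset.univ.image (kB : Finset (Fin M) → Fin M × Fin L → Fin 4))),
      Indep (octTorus M L) (gr k.1) ∧ om (gr k.1) = none := by
    rintro ⟨k, hk⟩
    simp only [Finset.mem_union, Finset.mem_image, Finset.mem_univ, true_and] at hk
    rcases hk with ⟨S, rfl⟩ | ⟨T, rfl⟩
    · exact critA S
    · exact critB T
  refine Fintype.card_of_bijective (f := fun k => ⟨IndepSet.of (gr k.1) (hk k).1, (hk k).2⟩) ⟨?_, ?_⟩
  · intro k k' h
    have h' : gr k.1 = gr k'.1 := congrArg (fun K => K.1.car) h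
    exact Subtype.ext (gr_inj h')
  · rintro ⟨I, hI⟩
    rcases crit_form I.ind hI with ⟨S, hS⟩ | ⟨T, hT⟩
    · exact ⟨⟨kA S, by simp⟩, Subtype.ext (IndepSet.car_inj hS.symm)⟩
    · exact ⟨⟨kB T, by simp⟩, Subtype.ext (IndepSet.car_inj hT.symm)⟩

end Concrete

/-- For `M, L ≥ 2`, the hard-core fermion model on the torus
octagon-square lattice `O_{M,L}` has exactly `2^M + 2^L − 1` zero-energy ground states,
and every ground state is an eigenvector of the number operator with eigenvalue `M·L`
(filling `1/4` of the `4ML` sites). -/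
theorem octagon_square_torus_ground_states (M L : ℕ) [NeZero M] [NeZero L]
    (hM : 2 ≤ M) (hL : 2 ≤ L)
    [LinearOrder (Fin M × Fin L × Fin 4)] :
    Module.finrank ℂ ↥(LinearMap.ker (hamiltonian (octTorus M L))) = 2 ^ M + 2 ^ L - 1 ∧
    ∀ ψ ∈ LinearMap.ker (hamiltonian (octTorus M L)),
      numberOp (octTorus M L) ψ = ((M * L : ℕ) : ℂ) • ψ := by
  exact ⟨om_matching.finrank.trans card_IsC, fun ψ hψ => om_matching.number ψ hψ⟩
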